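/- Let n ≥ 3 and let 𝔹 be the open unit ball in ℝⁿ. For x ∈ 𝔹 with r = |x|, let 𝒦_n(x) be the smallest constant such that |∇u(x)| ≤ 𝒦_n(x)·‖g‖_{L^∞(S^{n−1})} for every u that is the Poisson integral over S^{n−1} of a boundary function g ∈ L^∞(S^{n−1}). Then 𝒦_n(x) = [2^{n−2}(n−2) / (π (1+r)^{n−1} (1−r))] · sup_{γ≥0} (1/√(1+γ²)) ∫₀^π sin^{n−3}φ dφ ∫₀^{π/2} G_n(θ, φ; r, γ) dθ, where G_n(θ, φ; r, γ) = |n cos 2θ + n γ sin 2θ cos φ + (n−2) r| · sin^{n−2}θ / [1 + ((1−r)/(1+r))² tan²θ]^{(n−2)/2}. -/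

import Mathlib

open MeasureTheory Real Filter Metric
open scoped Real RealInnerProductSpace

noncomputable section

/-- `Eu n` is the Euclidean space `ℝⁿ`. -/
abbrev Eu (n : ℕ) := EuclideanSpace ℝ (Fin n)

/-- `ω_n`: the surface area of the unit sphere `S^{n-1}` in `ℝⁿ`,
given by the classical formula `2 π^{n/2} / Γ(n/2)`. -/
def sphereArea (n : ℕ) : ℝ := 2 * π ^ ((n : ℝ) / 2) / Real.Gamma ((n : ℝ) / 2)

/-- The function `G_n(θ, φ; r, γ)` from the statement. -/
def Gfun (n : ℕ) (θ φ r γ : ℝ) : ℝ :=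
  |(n : ℝ) * Real.cos (2 * θ) + (n : ℝ) * γ * Real.sin (2 * θ) * Real.cos φ +
      ((n : ℝ) - 2) * r| * Real.sin θ ^ (n - 2) /
    (1 + ((1 - r) / (1 + r)) ^ 2 * Real.tan θ ^ 2) ^ (((n : ℝ) - 2) / 2)

/-- The claimed value of the sharp coefficient `𝒦_n(x)` (with `r = |x|`). -/
def Kcoef (n : ℕ) (r : ℝ) : ℝ :=
  (2 ^ (n - 2) * ((n : ℝ) - 2) / (π * (1 + r) ^ (n - 1) * (1 - r))) *
    ⨆ γ ∈ Set.Ici (0 : ℝ), (1 / Real.sqrt (1 + γ ^ 2)) *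
      ∫ φ in (0:ℝ)..π, Real.sin φ ^ (n - 3) * ∫ θ in (0:ℝ)..(π / 2), Gfun n θ φ r γ

/-- The Poisson integral `u(x) = (1/ωₙ) ∫_{S^{n-1}} ((1-|x|²)/|y-x|ⁿ) g(y) dσ_y`
of a boundary function `g ∈ L^∞(S^{n-1})`. -/
def poissonBall {n : ℕ} (g : Metric.sphere (0 : Eu n) 1 → ℝ) (x : Eu n) : ℝ :=
  (1 / sphereArea n) * ∫ y : Metric.sphere (0 : Eu n) 1,
    ((1 - ‖x‖ ^ 2) / ‖(y : Eu n) - x‖ ^ n) * g y ∂(volume.toSphere)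


open Set in
lemma lintegral_polar_Eu {d : ℕ} (h : Eu d → ENNReal) (hh : Measurable h) (hd : 1 ≤ d) :
    ∫⁻ x : Eu d, h x = ∫⁻ y : Metric.sphere (0 : Eu d) 1,
      (∫⁻ ρ in Ioi (0:ℝ), ENNReal.ofReal (ρ ^ (d-1)) * h (ρ • (y : Eu d)))
        ∂((volume : Measure (Eu d)).toSphere) := by
  have : Nonempty (Fin d) := ⟨⟨0, hd⟩⟩
  have hm := (volume : Measure (Eu d)).measurePreserving_homeomorphUnitSphereProd
  have hsymm := (MeasurePreserving.symm
    ((homeomorphUnitSphereProd (Eu d)).toMeasurableEquiv) hm)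
  calc ∫⁻ x : Eu d, h x = ∫⁻ x : ({(0 : Eu d)}ᶜ : Set (Eu d)), h (x : Eu d)
          ∂((volume : Measure (Eu d)).comap Subtype.val) := by
        rw [lintegral_subtype_comap (measurableSet_singleton _).compl h, restrict_compl_singleton]
    _ = ∫⁻ p, h ((p.2 : ℝ) • (p.1 : Eu d))
          ∂((volume : Measure (Eu d)).toSphere.prod (.volumeIoiPow (Module.finrank ℝ (Eu d) - 1))) := by
        exact (hsymm.lintegral_comp (hh.comp measurable_subtype_coe)).symm
    _ = ∫⁻ y : Metric.sphere (0 : Eu d) 1, (∫⁻ ρ : Ioi (0:ℝ), h ((ρ : ℝ) • (y : Eu d))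
          ∂(.volumeIoiPow (Module.finrank ℝ (Eu d) - 1)))
          ∂((volume : Measure (Eu d)).toSphere) := by
        rw [lintegral_prod]
        exact (hh.comp (by fun_prop)).aemeasurable
    _ = _ := by
        refine lintegral_congr fun y => ?_
        have hy : Measurable (fun ρ : Ioi (0:ℝ) => h ((ρ : ℝ) • (y : Eu d))) :=
          hh.comp (by fun_prop)
        rw [Measure.volumeIoiPow, lintegral_withDensity_eq_lintegral_mul _ (by fun_prop) hy]
        simp only [Pi.mul_apply, finrank_euclideanSpace, Fintype.card_fin]
        rw [lintegral_subtype_comap measurableSet_Ioi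
          (fun ρ : ℝ => ENNReal.ofReal (ρ ^ (d-1)) * h (ρ • (y : Eu d)))]

open Set in
lemma lintegral_radial_Eu {d : ℕ} (h : ℝ → ENNReal) (hh : Measurable h) (hd : 1 ≤ d) :
    ∫⁻ x : Eu d, h ‖x‖ = (volume : Measure (Eu d)).toSphere univ *
      ∫⁻ ρ in Ioi (0:ℝ), ENNReal.ofReal (ρ ^ (d-1)) * h ρ := by
  rw [lintegral_polar_Eu (fun x => h ‖x‖) (hh.comp measurable_norm) hd, mul_comm,
    ← lintegral_const]
  refine lintegral_congr fun y => ?_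
  refine setLIntegral_congr_fun measurableSet_Ioi fun ρ hρ => ?_
  have hρ : 0 < ρ := hρ
  simp [norm_smul, abs_of_pos hρ]

open Set in
lemma lintegral_halfplane (h : ℝ × ℝ → ENNReal) (hh : Measurable h) :
    ∫⁻ b : ℝ, ∫⁻ s in Ioi (0:ℝ), h (b, s) =
      ∫⁻ q in Ioi (0:ℝ), ∫⁻ φ in Ioo 0 π, ENNReal.ofReal q * h (q * cos φ, q * sin φ) := by
  have hS : MeasurableSet (univ ×ˢ Ioi (0:ℝ) : Set (ℝ × ℝ)) :=
    MeasurableSet.univ.prod measurableSet_Ioi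
  have h1 : ∫⁻ b : ℝ, ∫⁻ s in Ioi (0:ℝ), h (b, s)
      = ∫⁻ p : ℝ × ℝ, (univ ×ˢ Ioi (0:ℝ)).indicator h p := by
    rw [lintegral_indicator hS, Measure.volume_eq_prod, ← Measure.prod_restrict,
      Measure.restrict_univ, lintegral_prod _ hh.aemeasurable]
  rw [h1, ← lintegral_comp_polarCoord_symm, polarCoord_target]
  have hm : Measurable (fun p : ℝ × ℝ => ENNReal.ofReal p.1 •
      (univ ×ˢ Ioi (0:ℝ)).indicator h (polarCoord.symm p)) := by
    have := (hh.indicator hS).comp continuous_polarCoord_symm.measurable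
    simp only [smul_eq_mul]
    exact (by fun_prop : Measurable fun p : ℝ × ℝ => ENNReal.ofReal p.1).mul this
  rw [Measure.volume_eq_prod, ← Measure.prod_restrict, lintegral_prod _ hm.aemeasurable]
  refine setLIntegral_congr_fun measurableSet_Ioi fun q hq => ?_
  have hq : 0 < q := hq
  simp only [polarCoord_symm_apply, smul_eq_mul]
  rw [← lintegral_indicator measurableSet_Ioo, ← lintegral_indicator measurableSet_Ioo]
  refine lintegral_congr fun φ => ?_
  by_cases hφ : φ ∈ Ioo 0 π
  · have h2 : φ ∈ Ioo (-π) π := ⟨by linarith [hφ.1, pi_pos], hφ.2⟩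
    have : 0 < q * sin φ := mul_pos hq (sin_pos_of_pos_of_lt_pi hφ.1 hφ.2)
    rw [indicator_of_mem hφ, indicator_of_mem h2, indicator_of_mem (by simpa using this)]
  · rw [indicator_of_notMem hφ]
    by_cases h2 : φ ∈ Ioo (-π) π
    · have h3 : φ ≤ 0 := by
        by_contra hc
        exact hφ ⟨not_le.mp hc, h2.2⟩
      have : q * sin φ ≤ 0 := mul_nonpos_of_nonneg_of_nonpos hq.le
        (sin_nonpos_of_nonpos_of_neg_pi_le h3 h2.1.le)
      rw [indicator_of_mem h2, indicator_of_notMem (by simpa using this), mul_zero]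
    · rw [indicator_of_notMem h2]

lemma exists_onb {m : ℕ} (e v : Eu (m+2)) (he : ‖e‖ = 1) (hv : ‖v‖ = 1) (hev : ⟪e, v⟫ = 0) :
    ∃ b : OrthonormalBasis (Fin (m+2)) ℝ (Eu (m+2)), b 0 = e ∧ b 1 = v := by
  classical
  let f : Fin (m+2) → Eu (m+2) := fun i => if i = 0 then e else v
  have hf : Orthonormal ℝ (({0, 1} : Set (Fin (m+2))).domRestrict f) := by
    constructor
    · rintro ⟨i, hi⟩
      rcases hi with rfl | hi
      · simp [f, he]
      · have : i = 1 := hi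
        subst this
        simp [f, hv]
    · rintro ⟨i, hi⟩ ⟨j, hj⟩ hij
      have h10 : (1 : Fin (m+2)) ≠ 0 := by simp
      rcases hi with rfl | hi <;> rcases hj with rfl | hj
      · exact absurd rfl hij
      · have : j = 1 := hj
        subst this
        simpa [f] using hev
      · have : i = 1 := hi
        subst this
        simpa [f, real_inner_comm] using hev
      · have h1 : i = 1 := hi
        have h2 : j = 1 := hj
        subst h1 h2
        exact absurd rfl hij
  obtain ⟨b, hb⟩ := hf.exists_orthonormalBasis_extension_of_card_eq (by simp)
  refine ⟨b, ?_, ?_⟩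
  · rw [hb 0 (by simp)]; simp [f]
  · rw [hb 1 (by simp)]; simp [f]

lemma lintegral_split {m : ℕ} (Ψ : ℝ × ℝ × ℝ → ENNReal) (hΨ : Measurable Ψ)
    (e v : Eu (m+2)) (he : ‖e‖ = 1) (hv : ‖v‖ = 1) (hev : ⟪e, v⟫ = 0) :
    ∫⁻ x : Eu (m+2), Ψ (⟪e, x⟫, ⟪v, x⟫, √(‖x‖ ^ 2 - ⟪e, x⟫ ^ 2 - ⟪v, x⟫ ^ 2)) =
      ∫⁻ a : ℝ, ∫⁻ b : ℝ, ∫⁻ z : Eu m, Ψ (a, b, ‖z‖) := by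
  obtain ⟨b, rfl, rfl⟩ := exists_onb e v he hv hev
  have h1 : ∀ x : Eu (m+2), Ψ (⟪b 0, x⟫, ⟪b 1, x⟫, √(‖x‖ ^ 2 - ⟪b 0, x⟫ ^ 2 - ⟪b 1, x⟫ ^ 2))
      = (fun p : Fin (m+2) → ℝ => Ψ (p 0, p 1, √(∑ i : Fin m, p i.succ.succ ^ 2)))
        (WithLp.ofLp (b.repr x)) := by
    intro x
    have h2 : ‖x‖ ^ 2 = ‖b.repr x‖ ^ 2 := by simp
    have h3 : ∑ i : Fin m, (b.repr x) i.succ.succ ^ 2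
        = ‖x‖ ^ 2 - ⟪b 0, x⟫ ^ 2 - ⟪b 1, x⟫ ^ 2 := by
      rw [h2, EuclideanSpace.real_norm_sq_eq, Fin.sum_univ_succ, Fin.sum_univ_succ]
      simp [b.repr_apply_apply]
    change _ = Ψ ((b.repr x) 0, (b.repr x) 1, √(∑ i : Fin m, (b.repr x) i.succ.succ ^ 2))
    rw [h3, b.repr_apply_apply, b.repr_apply_apply]
  simp_rw [h1]
  have hmeas : Measurable (fun p : Fin (m+2) → ℝ =>
      Ψ (p 0, p 1, √(∑ i : Fin m, p i.succ.succ ^ 2))) := hΨ.comp (by fun_prop)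
  rw [b.measurePreserving_repr.lintegral_comp (f := fun y : Eu (m+2) =>
    (fun p : Fin (m+2) → ℝ => Ψ (p 0, p 1, √(∑ i : Fin m, p i.succ.succ ^ 2)))
        (WithLp.ofLp y)) (hmeas.comp (by fun_prop))]
  refine Eq.trans ((EuclideanSpace.volume_preserving_symm_measurableEquiv_toLp
    (Fin (m+2))).lintegral_comp hmeas) ?_
  rw [← ((volume_preserving_piFinSuccAbove (fun _ : Fin (m+2) => ℝ) 0).symm).lintegral_comp hmeas,
    Measure.volume_eq_prod, lintegral_prod]
  swap
  · exact (hmeas.comp (MeasurableEquiv.measurable _)).aemeasurable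
  refine lintegral_congr fun a => ?_
  have h4 : ∀ p : Fin (m+1) → ℝ, (fun p : Fin (m+2) → ℝ =>
      Ψ (p 0, p 1, √(∑ i : Fin m, p i.succ.succ ^ 2)))
      ((MeasurableEquiv.piFinSuccAbove (fun _ : Fin (m+2) => ℝ) 0).symm (a, p)) =
      (fun p : Fin (m+1) → ℝ => Ψ (a, p 0, √(∑ i : Fin m, p i.succ ^ 2))) p := by
    intro p
    simp only [MeasurableEquiv.piFinSuccAbove_symm_apply, Fin.insertNthEquiv_apply, Fin.insertNth_zero']
    rfl
  have hmeas2 : Measurable (fun p : Fin (m+1) → ℝ =>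
      Ψ (a, p 0, √(∑ i : Fin m, p i.succ ^ 2))) := hΨ.comp (by fun_prop)
  simp only [h4]
  rw [← ((volume_preserving_piFinSuccAbove (fun _ : Fin (m+1) => ℝ) 0).symm).lintegral_comp hmeas2,
    Measure.volume_eq_prod, lintegral_prod]
  swap
  · exact (hmeas2.comp (MeasurableEquiv.measurable _)).aemeasurable
  refine lintegral_congr fun c => ?_
  rw [← (EuclideanSpace.volume_preserving_symm_measurableEquiv_toLp (Fin m)).lintegral_comp]
  · refine lintegral_congr fun z => ?_
    rw [EuclideanSpace.norm_eq]
    simp [MeasurableEquiv.piFinSuccAbove_symm_apply]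
  · exact hmeas2.comp ((MeasurableEquiv.measurable _).comp (by fun_prop))

open Set in
lemma lintegral_sphere_slice {m : ℕ} (hm : 1 ≤ m) (f : ℝ × ℝ → ENNReal) (hf : Measurable f)
    (e v : Eu (m+2)) (he : ‖e‖ = 1) (hv : ‖v‖ = 1) (hev : ⟪e, v⟫ = 0) :
    ∫⁻ y : Metric.sphere (0 : Eu (m+2)) 1, f (⟪e, (y : Eu (m+2))⟫, ⟪v, (y : Eu (m+2))⟫)
        ∂((volume : Measure (Eu (m+2))).toSphere) =
      (volume : Measure (Eu m)).toSphere univ *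
      ∫⁻ t in Ioo 0 π, ∫⁻ φ in Ioo 0 π,
        ENNReal.ofReal (sin t ^ m * sin φ ^ (m-1)) * f (cos t, sin t * cos φ) := by
  obtain ⟨k, rfl⟩ : ∃ k, m = k + 1 := ⟨m - 1, by omega⟩
  simp only [Nat.add_sub_cancel]
  let w : ℝ → ENNReal := (Iio (1:ℝ)).indicator 1
  have hw : Measurable w := measurable_one.indicator measurableSet_Iio
  let N : ℝ × ℝ × ℝ → ℝ := fun p => √(p.1 ^ 2 + p.2.1 ^ 2 + p.2.2 ^ 2)
  have hN : Measurable N := by unfold N; fun_prop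
  let Ψ : ℝ × ℝ × ℝ → ENNReal := fun p => f (p.1 / N p, p.2.1 / N p) * w (N p)
  have hΨ : Measurable Ψ := (hf.comp (by fun_prop)).mul (hw.comp hN)
  let C : ENNReal := ∫⁻ ρ in Ioi (0:ℝ), ENNReal.ofReal (ρ ^ (k+2)) * w ρ
  have hC : C = ENNReal.ofReal (1 / (k + 3)) := by
    have h := Measure.volumeIoiPow_apply_Iio (k+2) ⟨1, mem_Ioi.2 one_pos⟩
    have h2 : C = Measure.volumeIoiPow (k+2) (Iio ⟨1, mem_Ioi.2 one_pos⟩) := by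
      rw [Measure.volumeIoiPow, withDensity_apply _ measurableSet_Iio,
        setLIntegral_subtype measurableSet_Ioi _ fun a : ℝ ↦ .ofReal (a ^ (k+2)),
        image_subtype_val_Ioi_Iio]
      change ∫⁻ ρ in Ioi (0:ℝ), ENNReal.ofReal (ρ ^ (k+2)) * w ρ = _
      rw [← lintegral_indicator measurableSet_Ioi, ← lintegral_indicator measurableSet_Ioo]
      refine lintegral_congr fun ρ => ?_
      by_cases h1 : 0 < ρ <;> by_cases h2 : ρ < 1 <;> simp [indicator, w, h1, h2]
    rw [h2, h]
    push_cast
    norm_num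
    congr 1
    ring
  have hC0 : C ≠ 0 := by
    rw [hC]
    have : (0:ℝ) < 1 / (k+3) := by positivity
    simpa using this
  have hCt : C ≠ ⊤ := by rw [hC]; exact ENNReal.ofReal_ne_top
  -- first computation
  have key : ∫⁻ x : Eu (k+1+2), Ψ (⟪e, x⟫, ⟪v, x⟫, √(‖x‖ ^ 2 - ⟪e, x⟫ ^ 2 - ⟪v, x⟫ ^ 2)) =
      (∫⁻ y : Metric.sphere (0 : Eu (k+1+2)) 1, f (⟪e, (y : Eu (k+1+2))⟫, ⟪v, (y : Eu (k+1+2))⟫)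
        ∂((volume : Measure (Eu (k+1+2))).toSphere)) * C := by
    have hNx : ∀ x : Eu (k+1+2), N (⟪e, x⟫, ⟪v, x⟫, √(‖x‖ ^ 2 - ⟪e, x⟫ ^ 2 - ⟪v, x⟫ ^ 2)) = ‖x‖ := by
      intro x
      have h5 : 0 ≤ ‖x‖ ^ 2 - ⟪e, x⟫ ^ 2 - ⟪v, x⟫ ^ 2 := by
        have h6 := real_inner_self_nonneg (x := x - ⟪e, x⟫ • e - ⟪v, x⟫ • v)
        have hve : ⟪v, e⟫ = 0 := by rw [real_inner_comm]; exact hev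
        simp only [inner_sub_left, inner_sub_right, inner_smul_left, inner_smul_right,
          real_inner_self_eq_norm_sq, he, hv, hev, hve, real_inner_comm e x,
          real_inner_comm v x, RCLike.conj_to_real] at h6
        nlinarith
      simp only [N]
      rw [Real.sq_sqrt h5]
      ring_nf
      exact Real.sqrt_sq (norm_nonneg x)
    rw [lintegral_polar_Eu (fun x : Eu (k+1+2) =>
      Ψ (⟪e, x⟫, ⟪v, x⟫, √(‖x‖ ^ 2 - ⟪e, x⟫ ^ 2 - ⟪v, x⟫ ^ 2))) (hΨ.comp (by fun_prop)) (by omega),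
      ← lintegral_mul_const']
    swap
    · exact hCt
    refine lintegral_congr fun y => ?_
    rw [← lintegral_const_mul _ (by fun_prop)]
    refine setLIntegral_congr_fun measurableSet_Ioi fun ρ hρ => ?_
    have hρ : 0 < ρ := hρ
    have hρN : ‖ρ • (y : Eu (k+1+2))‖ = ρ := by simp [norm_smul, abs_of_pos hρ]
    have hNr := hNx (ρ • (y : Eu (k+1+2)))
    simp only [Ψ]
    rw [hNr, hρN]
    simp only [inner_smul_right]
    rw [mul_div_cancel_left₀ _ hρ.ne', mul_div_cancel_left₀ _ hρ.ne',
      show k + 1 + 2 - 1 = k + 2 by omega]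
    ring
  have key2 : ∫⁻ x : Eu (k+1+2), Ψ (⟪e, x⟫, ⟪v, x⟫, √(‖x‖ ^ 2 - ⟪e, x⟫ ^ 2 - ⟪v, x⟫ ^ 2)) =
     (volume : Measure (Eu (k+1))).toSphere univ *
      (∫⁻ t in Ioo 0 π, ∫⁻ φ in Ioo 0 π,
        ENNReal.ofReal (sin t ^ (k+1) * sin φ ^ k) * f (cos t, sin t * cos φ)) * C := by
    have hSt : (volume : Measure (Eu (k+1))).toSphere univ ≠ ⊤ := measure_ne_top _ _
    rw [lintegral_split Ψ hΨ e v he hv hev]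
    have s1 : ∀ a b : ℝ, ∫⁻ z : Eu (k+1), Ψ (a, b, ‖z‖) =
        (volume : Measure (Eu (k+1))).toSphere univ *
        ∫⁻ s in Ioi (0:ℝ), ENNReal.ofReal (s ^ k) * Ψ (a, b, s) := fun a b =>
      lintegral_radial_Eu (fun s => Ψ (a, b, s)) (hΨ.comp (by fun_prop)) (by omega)
    simp_rw [s1, lintegral_const_mul' _ _ hSt]
    rw [mul_assoc]
    congr 1
    have s2 : ∀ a : ℝ, ∫⁻ b : ℝ, ∫⁻ s in Ioi (0:ℝ), ENNReal.ofReal (s ^ k) * Ψ (a, b, s) =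
        ∫⁻ q in Ioi (0:ℝ), ∫⁻ φ in Ioo 0 π, ENNReal.ofReal q *
          (ENNReal.ofReal ((q * sin φ) ^ k) * Ψ (a, q * cos φ, q * sin φ)) := fun a =>
      lintegral_halfplane (fun p => ENNReal.ofReal (p.2 ^ k) * Ψ (a, p.1, p.2))
        ((by fun_prop : Measurable fun p : ℝ × ℝ => ENNReal.ofReal (p.2 ^ k)).mul
          (hΨ.comp (by fun_prop)))
    simp_rw [s2]
    have hg : Measurable (fun p : ℝ × ℝ => ∫⁻ φ in Ioo 0 π, ENNReal.ofReal p.2 *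
          (ENNReal.ofReal ((p.2 * sin φ) ^ k) * Ψ (p.1, p.2 * cos φ, p.2 * sin φ))) := by
      refine Measurable.lintegral_prod_right' (f := fun z : (ℝ × ℝ) × ℝ => ENNReal.ofReal z.1.2 *
          (ENNReal.ofReal ((z.1.2 * sin z.2) ^ k) *
            Ψ (z.1.1, z.1.2 * cos z.2, z.1.2 * sin z.2))) ?_
      refine Measurable.mul (by fun_prop) (Measurable.mul (by fun_prop) (hΨ.comp (by fun_prop)))
    rw [lintegral_halfplane _ hg]
    have hin : Measurable (fun z : ℝ × ℝ => 
        ENNReal.ofReal (sin z.1 ^ (k+1) * sin z.2 ^ k) * f (cos z.1, sin z.1 * cos z.2)) :=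
      Measurable.mul (by fun_prop) (hf.comp (by fun_prop))
    rw [← lintegral_const_mul _ (by fun_prop)]
    refine setLIntegral_congr_fun measurableSet_Ioi fun ρ hρ => ?_
    have hρ : 0 < ρ := hρ
    rw [mul_comm, ← lintegral_const_mul _ hin.lintegral_prod_right']
    refine setLIntegral_congr_fun measurableSet_Ioo fun t ht => ?_
    have hst : 0 < sin t := sin_pos_of_pos_of_lt_pi ht.1 ht.2
    have hi2 : Measurable (fun φ : ℝ => 
        ENNReal.ofReal (sin t ^ (k+1) * sin φ ^ k) * f (cos t, sin t * cos φ)) :=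
      Measurable.mul (by fun_prop) (hf.comp (by fun_prop))
    rw [← lintegral_const_mul _ hi2, ← lintegral_const_mul' _ _ ENNReal.ofReal_ne_top]
    refine setLIntegral_congr_fun measurableSet_Ioo fun φ hφ => ?_
    have hsφ : 0 < sin φ := sin_pos_of_pos_of_lt_pi hφ.1 hφ.2
    have hNe : N (ρ * cos t, ρ * sin t * cos φ, ρ * sin t * sin φ) = ρ := by
      simp only [N]
      rw [show (ρ * cos t) ^ 2 + (ρ * sin t * cos φ) ^ 2 + (ρ * sin t * sin φ) ^ 2 = ρ ^ 2 by
        have h1 := sin_sq_add_cos_sq t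
        have h2 := sin_sq_add_cos_sq φ
        calc _ = ρ ^ 2 * (cos t ^ 2 + sin t ^ 2 * (sin φ ^ 2 + cos φ ^ 2)) := by ring
          _ = _ := by rw [h2, mul_one, add_comm, h1, mul_one]]
      exact Real.sqrt_sq hρ.le
    simp only [Ψ, hNe]
    rw [mul_div_cancel_left₀ _ hρ.ne', mul_assoc ρ (sin t) (cos φ), mul_div_cancel_left₀ _ hρ.ne']
    have : ENNReal.ofReal (ρ ^ (k+2)) * ENNReal.ofReal (sin t ^ (k+1) * sin φ ^ k) =
        ENNReal.ofReal ρ * (ENNReal.ofReal (ρ * sin t) * ENNReal.ofReal ((ρ * sin t * sin φ) ^ k)) := by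
      rw [← ENNReal.ofReal_mul (by positivity), ← ENNReal.ofReal_mul (by positivity),
        ← ENNReal.ofReal_mul (by positivity)]
      congr 1
      ring
    calc _ = (ENNReal.ofReal ρ * (ENNReal.ofReal (ρ * sin t) *
          ENNReal.ofReal ((ρ * sin t * sin φ) ^ k))) * (f (cos t, sin t * cos φ) * w ρ) := by ring
      _ = _ := by rw [← this]; ring
  rw [key] at key2
  exact (ENNReal.mul_left_inj hC0 hCt).mp key2

/-- The directional derivative of the Poisson kernel in slice coordinates. -/
def kern (m : ℕ) (r A B a b : ℝ) : ℝ :=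
  -2 * r * A / √(1 - 2 * r * a + r ^ 2) ^ (m + 2) +
    ((m : ℝ) + 2) * (1 - r ^ 2) * ((a - r) * A + b * B) / √(1 - 2 * r * a + r ^ 2) ^ (m + 4)

lemma measurable_kern (m : ℕ) (r A B : ℝ) :
    Measurable (fun p : ℝ × ℝ => kern m r A B p.1 p.2) := by
  unfold kern; fun_prop

lemma cos_two_arctan (z : ℝ) : cos (2 * arctan z) = (1 - z ^ 2) / (1 + z ^ 2) := by
  have : 1 + z ^ 2 ≠ 0 := by positivity
  rw [cos_two_mul, cos_sq_arctan]; field_simp; ring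

lemma sin_two_arctan (z : ℝ) : sin (2 * arctan z) = 2 * z / (1 + z ^ 2) := by
  have h : 0 < 1 + z ^ 2 := by positivity
  have h2 := Real.mul_self_sqrt h.le
  have h3 : 0 < √(1 + z ^ 2) := Real.sqrt_pos.mpr h
  rw [sin_two_mul, sin_arctan, cos_arctan]
  field_simp
  rw [Real.sq_sqrt h.le]

lemma subst_pt (m : ℕ) (r A B θ φ : ℝ) (hr0 : 0 ≤ r) (hr1 : r < 1) (hA : 0 < A)
    (hθ : θ ∈ Set.Ioo 0 (π / 2)) :
    (2 * ((1 - r) / (1 + r)) / cos θ ^ 2 / (1 + ((1 - r) / (1 + r) * tan θ) ^ 2)) *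
      (sin (2 * arctan ((1 - r) / (1 + r) * tan θ)) ^ m *
        |kern m r A B (cos (2 * arctan ((1 - r) / (1 + r) * tan θ)))
          (sin (2 * arctan ((1 - r) / (1 + r) * tan θ)) * cos φ)|) =
      A * (2 ^ (m + 1) / ((1 + r) ^ (m + 1) * (1 - r))) * Gfun (m + 2) θ φ r (B / A) := by
  have hc : 0 < cos θ := cos_pos_of_mem_Ioo ⟨by linarith [hθ.1, pi_pos], hθ.2⟩
  have hs : 0 < sin θ := sin_pos_of_pos_of_lt_pi hθ.1 (by linarith [hθ.2, pi_pos])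
  have h1r : 0 < 1 - r := by linarith
  have h1r' : 0 < 1 + r := by linarith
  rw [cos_two_arctan, sin_two_arctan]
  set k := (1 - r) / (1 + r) with hk
  have hkpos : 0 < k := by positivity
  unfold Gfun
  rw [← mul_pow]
  set Q := 1 + (k * tan θ) ^ 2 with hQ
  have hQpos : 0 < Q := by positivity
  have hrp : Q ^ ((((m + 2 : ℕ) : ℝ) - 2) / 2) = √Q ^ m := by
    rw [Real.sqrt_eq_rpow, ← Real.rpow_natCast, ← Real.rpow_mul hQpos.le]
    congr 1
    push_cast; ring
  rw [hrp]
  set q := √Q with hq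
  have hqpos : 0 < q := Real.sqrt_pos.mpr hQpos
  have hqQ : q ^ 2 = Q := Real.sq_sqrt hQpos.le
  have hcs := sin_sq_add_cos_sq θ
  have htan : tan θ = sin θ / cos θ := tan_eq_sin_div_cos θ
  have hQ' : q ^ 2 * cos θ ^ 2 = cos θ ^ 2 + k ^ 2 * sin θ ^ 2 := by
    rw [hqQ, hQ, htan]; field_simp
  have hk1 : k * (1 + r) = 1 - r := by rw [hk]; field_simp
  -- rho
  have hrho2 : 1 - 2 * r * ((1 - (k * tan θ) ^ 2) / Q) + r ^ 2 = ((1 - r) / (cos θ * q)) ^ 2 := by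
    rw [div_pow, ← hqQ, htan, eq_div_iff (by positivity)]
    field_simp
    have e1 : (1 + r) * k = 1 - r := by linarith
    calc _ = (1 - r) ^ 2 * cos θ ^ 2 + ((1 + r) * k) ^ 2 * sin θ ^ 2
            + (1 + r ^ 2) * (q ^ 2 * cos θ ^ 2 - (cos θ ^ 2 + k ^ 2 * sin θ ^ 2)) := by ring
      _ = (1 - r) ^ 2 * (sin θ ^ 2 + cos θ ^ 2) := by rw [e1, hQ']; ring
      _ = _ := by rw [hcs]; ring
  have hrho : √(1 - 2 * r * ((1 - (k * tan θ) ^ 2) / Q) + r ^ 2) = (1 - r) / (cos θ * q) := by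
    rw [hrho2]; exact Real.sqrt_sq (by positivity)
  have hkern : kern m r A B ((1 - (k * tan θ) ^ 2) / Q) (2 * (k * tan θ) / Q * cos φ) =
      A / ((1 - r) / (cos θ * q)) ^ (m + 2) *
      ((((m + 2 : ℕ) : ℝ)) * cos (2 * θ) + ((m + 2 : ℕ) : ℝ) * (B / A) * sin (2 * θ) * cos φ +
        (((m + 2 : ℕ) : ℝ) - 2) * r) := by
    unfold kern
    rw [hrho]
    set ρ := (1 - r) / (cos θ * q) with hρ
    have hρpos : 0 < ρ := by positivity
    have f1 : (1 - r ^ 2) * ((1 - (k * tan θ) ^ 2) / Q - r) = ρ ^ 2 * (cos (2 * θ) + r) := by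
      rw [← hqQ, htan, hρ, cos_two_mul]
      field_simp
      have e2 : (1 - r ^ 2) * (cos θ ^ 2 - k ^ 2 * sin θ ^ 2 - r * (q ^ 2 * cos θ ^ 2)) =
        (1 - r) ^ 2 * (2 * cos θ ^ 2 - 1 + r) := by
        rw [hQ']
        have e3 : (1 + r) ^ 2 * k ^ 2 = (1 - r) ^ 2 := by rw [← hk1]; ring
        have e4 : sin θ ^ 2 = 1 - cos θ ^ 2 := by linarith
        rw [e4]
        linear_combination (-(1 - r) * (1 - cos θ ^ 2)) * e3
      linear_combination e2
    have f2 : (1 - r ^ 2) * (2 * (k * tan θ) / Q) = ρ ^ 2 * sin (2 * θ) := by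
      rw [← hqQ, htan, hρ, sin_two_mul]
      field_simp
      linear_combination (1 - r) * hk1
    have f3 : ((m : ℝ) + 2) * (1 - r ^ 2) * (((1 - (k * tan θ) ^ 2) / Q - r) * A +
        2 * (k * tan θ) / Q * cos φ * B) = ρ ^ 2 * (((m : ℝ) + 2) * ((cos (2 * θ) + r) * A +
          sin (2 * θ) * cos φ * B)) := by
      linear_combination ((m : ℝ) + 2) * A * f1 + ((m : ℝ) + 2) * B * cos φ * f2
    rw [f3, show m + 4 = (m + 2) + 2 by ring, pow_add ρ (m + 2) 2]
    push_cast
    field_simp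
    ring
  rw [hkern, abs_mul, abs_of_pos (by positivity : 0 < A / ((1 - r) / (cos θ * q)) ^ (m + 2))]
  rw [show m + 2 - 2 = m by omega]
  generalize |(((m + 2 : ℕ) : ℝ)) * cos (2 * θ) + ((m + 2 : ℕ) : ℝ) * (B / A) * sin (2 * θ) * cos φ +
        (((m + 2 : ℕ) : ℝ) - 2) * r| = Z
  rw [← hqQ, htan, hk]
  simp only [div_pow, mul_pow]
  field_simp
  ring

lemma lintegral_subst (r : ℝ) (hr0 : 0 ≤ r) (hr1 : r < 1) (h : ℝ → ENNReal) :
    ∫⁻ t in Set.Ioo 0 π, h t = ∫⁻ θ in Set.Ioo 0 (π / 2),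
      ENNReal.ofReal (2 * ((1 - r) / (1 + r)) / cos θ ^ 2 / (1 + ((1 - r) / (1 + r) * tan θ) ^ 2)) *
        h (2 * arctan ((1 - r) / (1 + r) * tan θ)) := by
  have h1r : 0 < 1 - r := by linarith
  have h1r' : 0 < 1 + r := by linarith
  set k := (1 - r) / (1 + r) with hk
  have hkpos : 0 < k := by positivity
  have himg : (fun θ => 2 * arctan (k * tan θ)) '' Set.Ioo 0 (π / 2) = Set.Ioo 0 π := by
    ext τ
    constructor
    · rintro ⟨θ, hθ, rfl⟩
      have ht : 0 < tan θ := tan_pos_of_pos_of_lt_pi_div_two hθ.1 hθ.2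
      have h1 : 0 < arctan (k * tan θ) := Real.arctan_pos.mpr (by positivity)
      have h2 := arctan_lt_pi_div_two (k * tan θ)
      exact ⟨by simpa using h1, by simp only; linarith⟩
    · intro hτ
      have ht : 0 < tan (τ / 2) := tan_pos_of_pos_of_lt_pi_div_two (by linarith [hτ.1])
        (by linarith [hτ.2])
      refine ⟨arctan (tan (τ / 2) / k), ⟨Real.arctan_pos.mpr (by positivity),
        arctan_lt_pi_div_two _⟩, ?_⟩
      simp only [tan_arctan]
      rw [mul_div_cancel₀ _ hkpos.ne', arctan_tan (by linarith [hτ.1, pi_pos]) (by linarith [hτ.2])]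
      ring
  rw [← himg]
  refine lintegral_image_eq_lintegral_deriv_mul_of_monotoneOn measurableSet_Ioo ?_ ?_ h
  · intro θ hθ
    have hc : 0 < cos θ := cos_pos_of_mem_Ioo ⟨by linarith [hθ.1, pi_pos], hθ.2⟩
    have h1 := (((hasDerivAt_tan hc.ne').const_mul k).arctan.const_mul 2).hasDerivWithinAt
      (s := Set.Ioo 0 (π / 2))
    refine h1.congr_deriv ?_
    ring
  · intro θ hθ θ' hθ' hle
    have : tan θ ≤ tan θ' := by
      rcases hle.eq_or_lt with h | h
      · rw [h]
      · exact (tan_lt_tan_of_lt_of_lt_pi_div_two (by linarith [hθ.1, pi_pos]) hθ'.2 h).le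
    simp only
    gcongr

/-- The double integral in the statement. -/
def Idbl (m : ℕ) (r γ : ℝ) : ℝ :=
  ∫ φ in (0:ℝ)..π, sin φ ^ (m - 1) * ∫ θ in (0:ℝ)..(π / 2), Gfun (m + 2) θ φ r γ

lemma measurable_Gfun (n : ℕ) (r γ : ℝ) :
    Measurable (fun p : ℝ × ℝ => Gfun n p.2 p.1 r γ) := by
  unfold Gfun
  simp only [Real.tan_eq_sin_div_cos]
  fun_prop

lemma Gfun_nonneg (n : ℕ) (r γ θ φ : ℝ) (hθ : θ ∈ Set.Ioo 0 (π / 2)) : 0 ≤ Gfun n θ φ r γ := by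
  have hs : 0 < sin θ := sin_pos_of_pos_of_lt_pi hθ.1 (by linarith [hθ.2, pi_pos])
  unfold Gfun
  positivity

lemma abs_Gfun_le (m : ℕ) (r γ θ φ : ℝ) (hr0 : 0 ≤ r) (hr1 : r < 1) (hγ : 0 ≤ γ) :
    |Gfun (m + 2) θ φ r γ| ≤ 2 * (m + 2) * (1 + γ) := by
  unfold Gfun
  have hQ : 1 ≤ 1 + ((1 - r) / (1 + r)) ^ 2 * tan θ ^ 2 := by
    have : 0 ≤ ((1 - r) / (1 + r)) ^ 2 * tan θ ^ 2 := by positivity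
    linarith
  have hD : 1 ≤ (1 + ((1 - r) / (1 + r)) ^ 2 * tan θ ^ 2) ^ ((((m + 2 : ℕ) : ℝ) - 2) / 2) := by
    apply Real.one_le_rpow hQ
    push_cast
    have : (0:ℝ) ≤ m := Nat.cast_nonneg m
    linarith
  rw [abs_div, abs_of_pos (lt_of_lt_of_le one_pos hD), abs_mul, abs_abs, abs_pow]
  have h1 : |sin θ| ^ (m + 2 - 2) ≤ 1 := pow_le_one₀ (abs_nonneg _) (abs_sin_le_one θ)
  have h2 : |((m + 2 : ℕ) : ℝ) * cos (2 * θ) + ((m + 2 : ℕ) : ℝ) * γ * sin (2 * θ) * cos φ +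
      (((m + 2 : ℕ) : ℝ) - 2) * r| ≤ 2 * (m + 2) * (1 + γ) := by
    push_cast
    have hm : (0:ℝ) ≤ m := Nat.cast_nonneg m
    calc _ ≤ |((m : ℝ) + 2) * cos (2 * θ)| + |((m : ℝ) + 2) * γ * sin (2 * θ) * cos φ|
          + |((m : ℝ) + 2 - 2) * r| := abs_add_three _ _ _
      _ ≤ ((m : ℝ) + 2) * 1 + ((m : ℝ) + 2) * γ * 1 * 1 + (m : ℝ) * 1 := by
          rw [abs_mul, abs_mul, abs_mul, abs_mul, abs_mul, abs_of_nonneg hγ,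
            abs_of_nonneg (by positivity : (0:ℝ) ≤ (m : ℝ) + 2), abs_of_nonneg hr0,
            abs_of_nonneg (by linarith : (0:ℝ) ≤ (m : ℝ) + 2 - 2), add_sub_cancel_right]
          gcongr
          · exact abs_cos_le_one _
          · exact abs_sin_le_one _
          · exact abs_cos_le_one _
      _ ≤ _ := by nlinarith [mul_nonneg hm hγ]
  calc _ ≤ (2 * (m + 2) * (1 + γ)) * 1 / 1 := by gcongr
    _ = _ := by ring

lemma Gint_bound (m : ℕ) (r γ φ : ℝ) (hr0 : 0 ≤ r) (hr1 : r < 1) (hγ : 0 ≤ γ) :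
    |∫ θ in (0:ℝ)..(π / 2), Gfun (m + 2) θ φ r γ| ≤ 2 * (m + 2) * (1 + γ) * (π / 2) := by
  have := intervalIntegral.norm_integral_le_of_norm_le_const (a := 0) (b := π / 2)
    (f := fun θ => Gfun (m + 2) θ φ r γ) (C := 2 * (m + 2) * (1 + γ))
    (fun θ _ => abs_Gfun_le m r γ θ φ hr0 hr1 hγ)
  rwa [sub_zero, abs_of_pos (by positivity)] at this

lemma Gint_nonneg (m : ℕ) (r γ φ : ℝ) :
    0 ≤ ∫ θ in (0:ℝ)..(π / 2), Gfun (m + 2) θ φ r γ := by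
  rw [intervalIntegral.integral_of_le (by positivity), integral_Ioc_eq_integral_Ioo]
  exact setIntegral_nonneg measurableSet_Ioo fun θ hθ => Gfun_nonneg _ _ _ _ _ hθ

lemma Idbl_nonneg (m : ℕ) (r γ : ℝ) : 0 ≤ Idbl m r γ := by
  unfold Idbl
  rw [intervalIntegral.integral_of_le (by positivity), integral_Ioc_eq_integral_Ioo]
  refine setIntegral_nonneg measurableSet_Ioo fun φ hφ => ?_
  have := sin_pos_of_pos_of_lt_pi hφ.1 hφ.2
  have := Gint_nonneg m r γ φ
  positivity

lemma Idbl_le (m : ℕ) (r γ : ℝ) (hr0 : 0 ≤ r) (hr1 : r < 1) (hγ : 0 ≤ γ) :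
    Idbl m r γ ≤ 2 * (m + 2) * (1 + γ) * (π / 2) * π := by
  have := intervalIntegral.norm_integral_le_of_norm_le_const (a := 0) (b := π)
    (f := fun φ => sin φ ^ (m - 1) * ∫ θ in (0:ℝ)..(π / 2), Gfun (m + 2) θ φ r γ)
    (C := 2 * (m + 2) * (1 + γ) * (π / 2)) (fun φ _ => by
      rw [norm_mul, norm_pow]
      have h1 : ‖sin φ‖ ^ (m - 1) ≤ 1 := pow_le_one₀ (norm_nonneg _) (abs_sin_le_one φ)
      have h2 := Gint_bound m r γ φ hr0 hr1 hγ
      calc _ ≤ 1 * (2 * (m + 2) * (1 + γ) * (π / 2)) := by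
            gcongr
            exact h2
        _ = _ := one_mul _)
  rw [sub_zero, abs_of_pos (by positivity)] at this
  exact (le_abs_self _).trans this

lemma measurable_Gint (m : ℕ) (r γ : ℝ) :
    Measurable (fun φ => ∫ θ in (0:ℝ)..(π / 2), Gfun (m + 2) θ φ r γ) := by
  have h := (measurable_Gfun (m + 2) r γ).stronglyMeasurable.integral_prod_right'
    (ν := volume.restrict (Set.Ioc 0 (π / 2)))
  simp only [intervalIntegral.integral_of_le (by positivity : (0:ℝ) ≤ π / 2)]
  exact h.measurable

lemma lintegral_Gfun (m : ℕ) (r γ φ : ℝ) (hr0 : 0 ≤ r) (hr1 : r < 1) (hγ : 0 ≤ γ) :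
    ∫⁻ θ in Set.Ioo 0 (π / 2), ENNReal.ofReal (Gfun (m + 2) θ φ r γ) =
      ENNReal.ofReal (∫ θ in (0:ℝ)..(π / 2), Gfun (m + 2) θ φ r γ) := by
  rw [intervalIntegral.integral_of_le (by positivity), integral_Ioc_eq_integral_Ioo,
    ofReal_integral_eq_lintegral_ofReal]
  · refine Measure.integrableOn_of_bounded (M := 2 * (m + 2) * (1 + γ)) (by simp)
      ((measurable_Gfun (m + 2) r γ).comp (by fun_prop : Measurable fun θ : ℝ => (φ, θ))
        |>.aestronglyMeasurable) ?_
    exact Eventually.of_forall fun θ => abs_Gfun_le m r γ θ φ hr0 hr1 hγ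
  · filter_upwards [ae_restrict_mem measurableSet_Ioo] with θ hθ
    exact Gfun_nonneg _ _ _ _ _ hθ

lemma lintegral_Idbl (m : ℕ) (r γ : ℝ) (hr0 : 0 ≤ r) (hr1 : r < 1) (hγ : 0 ≤ γ) :
    ∫⁻ φ in Set.Ioo 0 π, ENNReal.ofReal (sin φ ^ (m - 1)) *
      ∫⁻ θ in Set.Ioo 0 (π / 2), ENNReal.ofReal (Gfun (m + 2) θ φ r γ) =
      ENNReal.ofReal (Idbl m r γ) := by
  unfold Idbl
  rw [intervalIntegral.integral_of_le (by positivity), integral_Ioc_eq_integral_Ioo,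
    ofReal_integral_eq_lintegral_ofReal]
  · refine setLIntegral_congr_fun measurableSet_Ioo fun φ hφ => ?_
    have := sin_pos_of_pos_of_lt_pi hφ.1 hφ.2
    rw [lintegral_Gfun m r γ φ hr0 hr1 hγ, ENNReal.ofReal_mul (by positivity)]
  · refine Measure.integrableOn_of_bounded (M := 2 * (m + 2) * (1 + γ) * (π / 2)) (by simp)
      (Measurable.mul (by fun_prop) (measurable_Gint m r γ)).aestronglyMeasurable ?_
    refine Eventually.of_forall fun φ => ?_
    rw [norm_mul, norm_pow]
    have h1 : ‖sin φ‖ ^ (m - 1) ≤ 1 := pow_le_one₀ (norm_nonneg _) (abs_sin_le_one φ)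
    have h2 := Gint_bound m r γ φ hr0 hr1 hγ
    calc _ ≤ 1 * (2 * (m + 2) * (1 + γ) * (π / 2)) := by
          gcongr
          exact h2
      _ = _ := one_mul _
  · filter_upwards [ae_restrict_mem measurableSet_Ioo] with φ hφ
    have := sin_pos_of_pos_of_lt_pi hφ.1 hφ.2
    have := Gint_nonneg m r γ φ
    simp only [Pi.zero_apply]
    positivity

lemma sphereArea_eq (m : ℕ) (hm : 1 ≤ m) :
    ((volume : Measure (Eu m)).toSphere Set.univ).toReal = sphereArea m := by
  have : Nonempty (Fin m) := ⟨⟨0, hm⟩⟩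
  have hm0 : (0:ℝ) < m := by exact_mod_cast hm
  rw [Measure.toSphere_apply_univ, EuclideanSpace.volume_ball]
  have hG : Real.Gamma ((m:ℝ) / 2 + 1) = (m:ℝ) / 2 * Real.Gamma ((m:ℝ) / 2) :=
    Real.Gamma_add_one (by positivity)
  have hGp : 0 < Real.Gamma ((m:ℝ) / 2) := Real.Gamma_pos_of_pos (by positivity)
  have hpi : √π ^ m = π ^ ((m:ℝ) / 2) := by
    rw [Real.sqrt_eq_rpow, ← Real.rpow_natCast, ← Real.rpow_mul pi_pos.le]
    congr 1
    ring
  simp only [finrank_euclideanSpace, Fintype.card_fin, ENNReal.ofReal_one, one_pow, one_mul,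
    ENNReal.toReal_mul, ENNReal.toReal_natCast]
  rw [ENNReal.toReal_ofReal (by rw [hG]; positivity), hG, hpi]
  unfold sphereArea
  field_simp

lemma sphereArea_pos (m : ℕ) (hm : 1 ≤ m) : 0 < sphereArea m := by
  have hm0 : (0:ℝ) < m := by exact_mod_cast hm
  have hGp : 0 < Real.Gamma ((m:ℝ) / 2) := Real.Gamma_pos_of_pos (by positivity)
  unfold sphereArea
  positivity

lemma sphereArea_ratio (m : ℕ) (hm : 1 ≤ m) :
    1 / sphereArea (m + 2) * sphereArea m = m / (2 * π) := by
  have hm0 : (0:ℝ) < m := by exact_mod_cast hm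
  have hGp : 0 < Real.Gamma ((m:ℝ) / 2) := Real.Gamma_pos_of_pos (by positivity)
  have hG : Real.Gamma ((m:ℝ) / 2 + 1) = (m:ℝ) / 2 * Real.Gamma ((m:ℝ) / 2) :=
    Real.Gamma_add_one (by positivity)
  unfold sphereArea
  have h2 : (((m + 2 : ℕ) : ℝ)) / 2 = (m:ℝ) / 2 + 1 := by push_cast; ring
  rw [h2, hG, Real.rpow_add pi_pos, Real.rpow_one]
  field_simp

lemma lintegral_kern {m : ℕ} (hm : 1 ≤ m) (r A B : ℝ) (hr0 : 0 ≤ r) (hr1 : r < 1)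
    (hA : 0 < A) (hB : 0 ≤ B)
    (e v : Eu (m+2)) (he : ‖e‖ = 1) (hv : ‖v‖ = 1) (hev : ⟪e, v⟫ = 0) :
    ∫⁻ y : Metric.sphere (0 : Eu (m+2)) 1,
        ENNReal.ofReal |kern m r A B ⟪e, (y : Eu (m+2))⟫ ⟪v, (y : Eu (m+2))⟫|
        ∂((volume : Measure (Eu (m+2))).toSphere) =
      (volume : Measure (Eu m)).toSphere Set.univ *
        ENNReal.ofReal (A * (2 ^ (m + 1) / ((1 + r) ^ (m + 1) * (1 - r))) * Idbl m r (B / A)) := by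
  have h1r : 0 < 1 - r := by linarith
  have hγ : 0 ≤ B / A := by positivity
  have hK := measurable_kern m r A B
  have hf : Measurable (fun p : ℝ × ℝ => ENNReal.ofReal |kern m r A B p.1 p.2|) := by
    fun_prop
  rw [lintegral_sphere_slice hm (fun p => ENNReal.ofReal |kern m r A B p.1 p.2|) hf e v he hv hev]
  congr 1
  rw [ENNReal.ofReal_mul (by positivity), ← lintegral_Idbl m r (B / A) hr0 hr1 hγ]
  rw [lintegral_lintegral_swap]
  swap
  · refine Measurable.aemeasurable (Measurable.mul (by fun_prop) (hf.comp
      (g := fun p => ENNReal.ofReal |kern m r A B p.1 p.2|)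
      (f := fun z : ℝ × ℝ => (cos z.1, sin z.1 * cos z.2)) (by fun_prop)))
  rw [← lintegral_const_mul' _ _ ENNReal.ofReal_ne_top]
  refine setLIntegral_congr_fun measurableSet_Ioo fun φ hφ => ?_
  have hsφ := sin_pos_of_pos_of_lt_pi hφ.1 hφ.2
  try simp only
  rw [← lintegral_const_mul' _ _ ENNReal.ofReal_ne_top, ← lintegral_const_mul' _ _ ENNReal.ofReal_ne_top,
    lintegral_subst r hr0 hr1]
  refine setLIntegral_congr_fun measurableSet_Ioo fun θ hθ => ?_
  have hpt := subst_pt m r A B θ φ hr0 hr1 hA hθ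
  have hc : 0 < cos θ := cos_pos_of_mem_Ioo ⟨by linarith [hθ.1, pi_pos], hθ.2⟩
  have ht : 0 < tan θ := tan_pos_of_pos_of_lt_pi_div_two hθ.1 hθ.2
  have hst : 0 < sin (2 * arctan ((1 - r) / (1 + r) * tan θ)) := by
    rw [sin_two_arctan]; positivity
  try simp only
  rw [← ENNReal.ofReal_mul (by positivity), ← ENNReal.ofReal_mul (by positivity),
    ← ENNReal.ofReal_mul (by positivity), ← ENNReal.ofReal_mul (by positivity)]
  congr 1
  linear_combination (sin φ ^ (m - 1)) * hpt

lemma integral_kern {m : ℕ} (hm : 1 ≤ m) (r A B : ℝ) (hr0 : 0 ≤ r) (hr1 : r < 1)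
    (hA : 0 < A) (hB : 0 ≤ B)
    (e v : Eu (m+2)) (he : ‖e‖ = 1) (hv : ‖v‖ = 1) (hev : ⟪e, v⟫ = 0) :
    (1 / sphereArea (m + 2)) * ∫ y : Metric.sphere (0 : Eu (m+2)) 1,
        |kern m r A B ⟪e, (y : Eu (m+2))⟫ ⟪v, (y : Eu (m+2))⟫|
        ∂((volume : Measure (Eu (m+2))).toSphere) =
      2 ^ m * m / (π * (1 + r) ^ (m + 1) * (1 - r)) * (A * Idbl m r (B / A)) := by
  have h1r : 0 < 1 - r := by linarith
  have hmeas : Measurable fun y : Metric.sphere (0 : Eu (m+2)) 1 =>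
      |kern m r A B ⟪e, (y : Eu (m+2))⟫ ⟪v, (y : Eu (m+2))⟫| := by
    have := (measurable_kern m r A B).comp
      (by fun_prop : Measurable fun y : Metric.sphere (0 : Eu (m+2)) 1 =>
        (⟪e, (y : Eu (m+2))⟫, ⟪v, (y : Eu (m+2))⟫))
    exact measurable_norm.comp this
  rw [integral_eq_lintegral_of_nonneg_ae (Eventually.of_forall fun y => abs_nonneg _)
    hmeas.aestronglyMeasurable, lintegral_kern hm r A B hr0 hr1 hA hB e v he hv hev,
    ENNReal.toReal_mul, sphereArea_eq m hm, ← mul_assoc, sphereArea_ratio m hm,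
    ENNReal.toReal_ofReal (by have := Idbl_nonneg m r (B / A); positivity)]
  field_simp
  ring

/-- The gradient in `x` of the Poisson kernel. -/
def gradK {m : ℕ} (x y : Eu (m+2)) : Eu (m+2) :=
  (-2 / ‖y - x‖ ^ (m + 2)) • x +
    (((m : ℝ) + 2) * (1 - ‖x‖ ^ 2) / ‖y - x‖ ^ (m + 4)) • (y - x)

lemma hasFDerivAt_kernel {m : ℕ} (x y : Eu (m+2)) (hxy : y ≠ x) :
    HasFDerivAt (fun x : Eu (m+2) => (1 - ‖x‖ ^ 2) / ‖y - x‖ ^ (m+2))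
      (innerSL ℝ (gradK x y)) x := by
  have hρ : 0 < ‖y - x‖ := norm_pos_iff.mpr (sub_ne_zero.mpr hxy)
  have h1 : HasFDerivAt (fun x : Eu (m+2) => 1 - ‖x‖ ^ 2) (-(2 • innerSL ℝ x)) x :=
    ((hasStrictFDerivAt_norm_sq x).hasFDerivAt).const_sub 1
  have h2 : HasFDerivAt (fun x : Eu (m+2) => ‖y - x‖ ^ 2)
      (2 • (innerSL ℝ (y - x)).comp (-ContinuousLinearMap.id ℝ (Eu (m+2)))) x :=
    ((hasFDerivAt_id x).const_sub y).norm_sq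
  have h3 : HasFDerivAt (fun x : Eu (m+2) => ‖y - x‖)
      ((1 / (2 * √(‖y - x‖ ^ 2))) •
        (2 • (innerSL ℝ (y - x)).comp (-ContinuousLinearMap.id ℝ (Eu (m+2))))) x := by
    have := h2.sqrt (by positivity)
    simpa only [Real.sqrt_sq (norm_nonneg _)] using this
  have h4 : HasDerivAt (fun s : ℝ => (s ^ (m+2))⁻¹)
      (-(((m + 2 : ℕ) : ℝ) * ‖y - x‖ ^ (m + 1)) / (‖y - x‖ ^ (m+2)) ^ 2) ‖y - x‖ := by
    have := (hasDerivAt_pow (m+2) ‖y - x‖).inv (by positivity)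
    exact this
  have h5 := h1.mul (h4.comp_hasFDerivAt x h3)
  simp only [div_eq_mul_inv]
  refine h5.congr_fderiv ?_
  ext z
  simp only [Real.sqrt_sq (norm_nonneg _), gradK]
  simp [inner_add_left, inner_smul_left, inner_sub_left]
  field_simp
  ring

lemma gradK_bound {m : ℕ} (δ : ℝ) (hδ : 0 < δ) (x y : Eu (m+2)) (hx : ‖x‖ ≤ 1 - δ) (hy : ‖y‖ = 1) :
    ‖gradK x y‖ ≤ 2 / δ ^ (m + 2) + ((m : ℝ) + 2) / δ ^ (m + 4) * 2 := by
  have hρ : δ ≤ ‖y - x‖ := by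
    have := norm_sub_norm_le y x
    linarith
  have hρ2 : ‖y - x‖ ≤ 2 := (norm_sub_le y x).trans (by linarith)
  have hρ0 : 0 < ‖y - x‖ := by linarith
  have hx1 : ‖x‖ ≤ 1 := by linarith
  have hx2 : 0 ≤ 1 - ‖x‖ ^ 2 := by nlinarith [norm_nonneg x]
  unfold gradK
  refine (norm_add_le _ _).trans ?_
  rw [norm_smul, norm_smul]
  have e1 : ‖-2 / ‖y - x‖ ^ (m + 2)‖ = 2 / ‖y - x‖ ^ (m + 2) := by
    rw [norm_div, Real.norm_of_nonneg (by positivity : 0 ≤ ‖y - x‖ ^ (m+2))]; norm_num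
  have e2 : ‖((m : ℝ) + 2) * (1 - ‖x‖ ^ 2) / ‖y - x‖ ^ (m + 4)‖ ≤ ((m : ℝ) + 2) / δ ^ (m + 4) := by
    rw [Real.norm_of_nonneg (by positivity)]
    have : ((m : ℝ) + 2) * (1 - ‖x‖ ^ 2) ≤ (m : ℝ) + 2 := by
      have : 0 ≤ ‖x‖ ^ 2 := by positivity
      have hm : (0:ℝ) ≤ m := Nat.cast_nonneg m
      nlinarith
    gcongr
  rw [e1]
  refine add_le_add ?_ ?_
  · calc 2 / ‖y - x‖ ^ (m + 2) * ‖x‖ ≤ 2 / δ ^ (m + 2) * 1 := by gcongr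
      _ = _ := mul_one _
  · gcongr

lemma measurable_gradK {m : ℕ} (x : Eu (m+2)) :
    Measurable fun y : Metric.sphere (0 : Eu (m+2)) 1 => gradK x (y : Eu (m+2)) := by
  unfold gradK
  fun_prop

lemma inner_gradient_poisson {m : ℕ} (g : Metric.sphere (0 : Eu (m+2)) 1 → ℝ) (hg : Measurable g)
    (hg1 : ∀ᵐ y ∂((volume : Measure (Eu (m+2))).toSphere), |g y| ≤ 1)
    (x : Eu (m+2)) (hx : ‖x‖ < 1) (l : Eu (m+2)) :
    ⟪gradient (poissonBall g) x, l⟫ = (1 / sphereArea (m + 2)) *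
      ∫ y : Metric.sphere (0 : Eu (m+2)) 1, g y * ⟪gradK x (y : Eu (m+2)), l⟫
        ∂((volume : Measure (Eu (m+2))).toSphere) := by
  set μ := (volume : Measure (Eu (m+2))).toSphere with hμ
  set δ := (1 - ‖x‖) / 2 with hδ
  have hδ0 : 0 < δ := by rw [hδ]; linarith
  have hs : Metric.ball x δ ∈ nhds x := Metric.ball_mem_nhds x hδ0
  have hball : ∀ z ∈ Metric.ball x δ, ‖z‖ ≤ 1 - δ := by
    intro z hz
    have h1 : ‖z - x‖ < δ := by rwa [← dist_eq_norm]
    have h2 : ‖z‖ ≤ ‖z - x‖ + ‖x‖ := by simpa using norm_add_le (z - x) x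
    linarith
  set M := 2 / δ ^ (m + 2) + ((m : ℝ) + 2) / δ ^ (m + 4) * 2 with hM
  have hM0 : 0 ≤ M := by positivity
  let F : Eu (m+2) → Metric.sphere (0 : Eu (m+2)) 1 → ℝ := fun z y =>
    ((1 - ‖z‖ ^ 2) / ‖(y : Eu (m+2)) - z‖ ^ (m+2)) * g y
  let F' : Eu (m+2) → Metric.sphere (0 : Eu (m+2)) 1 → (Eu (m+2) →L[ℝ] ℝ) := fun z y =>
    g y • innerSL ℝ (gradK z (y : Eu (m+2)))
  have hF'm : AEStronglyMeasurable (F' x) μ := by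
    refine AEStronglyMeasurable.smul hg.aestronglyMeasurable ?_
    exact ((innerSL ℝ).continuous.comp_stronglyMeasurable
      (measurable_gradK x).stronglyMeasurable).aestronglyMeasurable
  have hF'b : ∀ᵐ y ∂μ, ∀ z ∈ Metric.ball x δ, ‖F' z y‖ ≤ M := by
    filter_upwards [hg1] with y hy z hz
    simp only [F', norm_smul, innerSL_apply_norm]
    have := gradK_bound δ hδ0 z (y : Eu (m+2)) (hball z hz) (by simp)
    calc ‖g y‖ * ‖gradK z (y : Eu (m+2))‖ ≤ 1 * M := by
          gcongr
          exact hy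
      _ = M := one_mul M
  have hFm : ∀ z, AEStronglyMeasurable (F z) μ := by
    intro z
    refine Measurable.aestronglyMeasurable ?_
    simp only [F]
    fun_prop
  have hFint : Integrable (F x) μ := by
    refine Integrable.of_bound (hFm x) (1 / δ ^ (m+2)) ?_
    filter_upwards [hg1] with y hy
    have hρ : δ ≤ ‖(y : Eu (m+2)) - x‖ := by
      have := norm_sub_norm_le (y : Eu (m+2)) x
      have hy1 : ‖(y : Eu (m+2))‖ = 1 := by simp
      linarith
    have hx2 : 0 ≤ 1 - ‖x‖ ^ 2 := by nlinarith [norm_nonneg x]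
    simp only [F, norm_mul]
    rw [Real.norm_of_nonneg (by positivity)]
    calc (1 - ‖x‖ ^ 2) / ‖(y : Eu (m+2)) - x‖ ^ (m + 2) * ‖g y‖ ≤ 1 / δ ^ (m+2) * 1 := by
          gcongr
          · have : 0 ≤ ‖x‖ ^ 2 := by positivity
            linarith
          · exact hy
      _ = _ := mul_one _
  have hdiff : ∀ᵐ y ∂μ, ∀ z ∈ Metric.ball x δ, HasFDerivAt (F · y) (F' z y) z := by
    refine Eventually.of_forall fun y z hz => ?_
    have hne : (y : Eu (m+2)) ≠ z := by
      intro h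
      have h1 := hball z hz
      have hy1 : ‖(y : Eu (m+2))‖ = 1 := by simp
      rw [← h, hy1] at h1
      linarith
    exact (hasFDerivAt_kernel z (y : Eu (m+2)) hne).mul_const (g y)
  have key := hasFDerivAt_integral_of_dominated_of_fderiv_le (μ := μ) (F := F) (F' := F')
    (bound := fun _ => M) hs (Eventually.of_forall hFm) hFint hF'm hF'b (integrable_const M) hdiff
  have key2 : HasFDerivAt (poissonBall g) ((1 / sphereArea (m+2)) • ∫ y, F' x y ∂μ) x :=
    key.const_mul (1 / sphereArea (m+2))
  have hint : Integrable (F' x) μ := by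
    refine Integrable.of_bound hF'm M ?_
    filter_upwards [hF'b] with y hy
    exact hy x (Metric.mem_ball_self hδ0)
  rw [gradient, InnerProductSpace.toDual_symm_apply, key2.fderiv, ContinuousLinearMap.smul_apply,
    ContinuousLinearMap.integral_apply hint]
  simp [F']

lemma inner_gradK {m : ℕ} (r A B : ℝ) (e v y : Eu (m+2)) (he : ‖e‖ = 1) 
    (hev : ⟪e, v⟫ = 0) (hy : ‖y‖ = 1) :
    ⟪gradK (r • e) y, A • e + B • v⟫ = kern m r A B ⟪e, y⟫ ⟪v, y⟫ := by
  have hve : ⟪v, e⟫ = 0 := by rw [real_inner_comm]; exact hev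
  have hee : ⟪e, e⟫ = 1 := by rw [real_inner_self_eq_norm_sq, he]; norm_num
  have hre : ‖r • e‖ ^ 2 = r ^ 2 := by rw [norm_smul, he, mul_one, Real.norm_eq_abs, sq_abs]
  have hρ : ‖y - r • e‖ = √(1 - 2 * r * ⟪e, y⟫ + r ^ 2) := by
    rw [← Real.sqrt_sq (norm_nonneg (y - r • e)), norm_sub_sq_real, hy, hre, inner_smul_right,
      real_inner_comm y e]
    congr 1
    ring
  unfold gradK kern
  rw [hre, hρ]
  simp only [inner_add_left, inner_add_right, inner_smul_left, inner_smul_right, inner_sub_left,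
    hee, hev, RCLike.conj_to_real, real_inner_comm e y, real_inner_comm v y]
  ring

lemma exists_unit_perp {m : ℕ} (e : Eu (m+2)) (he : ‖e‖ = 1) :
    ∃ v : Eu (m+2), ‖v‖ = 1 ∧ ⟪e, v⟫ = 0 := by
  have he0 : e ≠ 0 := by
    intro h
    rw [h, norm_zero] at he
    exact zero_ne_one he
  have : Fact (Module.finrank ℝ (Eu (m+2)) = (m + 1) + 1) := ⟨by simp⟩
  have hf := Submodule.finrank_orthogonal_span_singleton (𝕜 := ℝ) (n := m + 1) he0
  have : Nontrivial (Submodule.span ℝ {e})ᗮ :=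
    Module.nontrivial_of_finrank_pos (R := ℝ) (by rw [hf]; omega)
  obtain ⟨⟨w, hw⟩, hw0⟩ := exists_ne (0 : (Submodule.span ℝ {e})ᗮ)
  have hw0' : w ≠ 0 := fun h => hw0 (by simp [h])
  refine ⟨‖w‖⁻¹ • w, norm_smul_inv_norm hw0', ?_⟩
  rw [inner_smul_right, Submodule.mem_orthogonal_singleton_iff_inner_right.mp hw, mul_zero]

lemma exists_decomp {m : ℕ} (e l : Eu (m+2)) (he : ‖e‖ = 1) :
    ∃ (v : Eu (m+2)) (B : ℝ), ‖v‖ = 1 ∧ ⟪e, v⟫ = 0 ∧ 0 ≤ B ∧ l = ⟪e, l⟫ • e + B • v := by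
  by_cases h : l - ⟪e, l⟫ • e = 0
  · obtain ⟨v, hv, hev⟩ := exists_unit_perp e he
    exact ⟨v, 0, hv, hev, le_rfl, by rw [zero_smul, add_zero]; exact sub_eq_zero.mp h⟩
  · refine ⟨‖l - ⟪e, l⟫ • e‖⁻¹ • (l - ⟪e, l⟫ • e), ‖l - ⟪e, l⟫ • e‖, norm_smul_inv_norm h, ?_,
      norm_nonneg _, ?_⟩
    · rw [inner_smul_right, inner_sub_right, inner_smul_right, real_inner_self_eq_norm_sq, he]
      ring
    · rw [smul_smul, mul_inv_cancel₀ (norm_ne_zero_iff.mpr h), one_smul]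
      abel

lemma norm_sq_decomp {m : ℕ} (e v : Eu (m+2)) (he : ‖e‖ = 1) (hv : ‖v‖ = 1) (hev : ⟪e, v⟫ = 0)
    (A B : ℝ) : ‖A • e + B • v‖ = √(A ^ 2 + B ^ 2) := by
  rw [← Real.sqrt_sq (norm_nonneg (A • e + B • v)), norm_add_sq_real, norm_smul, norm_smul, he, hv,
    inner_smul_left, inner_smul_right, hev]
  congr 1
  simp

/-- The function of `γ` that is maximised. -/
def Hfun (m : ℕ) (r γ : ℝ) : ℝ := (1 / √(1 + γ ^ 2)) * Idbl m r γ

/-- The constant in front of the supremum. -/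
def Ccst (m : ℕ) (r : ℝ) : ℝ := 2 ^ m * m / (π * (1 + r) ^ (m + 1) * (1 - r))

lemma Kcoef_eq (m : ℕ) (r : ℝ) :
    Kcoef (m + 2) r = Ccst m r * ⨆ γ ∈ Set.Ici (0 : ℝ), Hfun m r γ := by
  have h : ((m + 2 : ℕ) : ℝ) - 2 = m := by push_cast; ring
  unfold Kcoef Ccst Hfun Idbl
  rw [h]
  rfl

lemma Ccst_nonneg (m : ℕ) (r : ℝ) (hr0 : 0 ≤ r) (hr1 : r < 1) : 0 ≤ Ccst m r := by
  have : 0 < 1 - r := by linarith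
  unfold Ccst
  positivity

lemma Hfun_nonneg (m : ℕ) (r γ : ℝ) : 0 ≤ Hfun m r γ := by
  have := Idbl_nonneg m r γ
  unfold Hfun
  positivity

lemma Hfun_le (m : ℕ) (r γ : ℝ) (hr0 : 0 ≤ r) (hr1 : r < 1) (hγ : 0 ≤ γ) :
    Hfun m r γ ≤ 2 * (2 * (m + 2) * (π / 2) * π) := by
  have h := Idbl_le m r γ hr0 hr1 hγ
  have h1 : 0 < √(1 + γ ^ 2) := Real.sqrt_pos.mpr (by positivity)
  have h2 : 1 + γ ≤ 2 * √(1 + γ ^ 2) := by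
    have a1 : 1 ≤ √(1 + γ ^ 2) := Real.le_sqrt_of_sq_le (by nlinarith)
    have a2 : γ ≤ √(1 + γ ^ 2) := Real.le_sqrt_of_sq_le (by nlinarith)
    linarith
  unfold Hfun
  rw [one_div, inv_mul_le_iff₀ h1]
  refine h.trans ?_
  have h3 : 0 ≤ 2 * ((m:ℝ) + 2) * (π / 2) * π := by positivity
  nlinarith [mul_le_mul_of_nonneg_left h2 h3]

lemma Hfun_le_sup (m : ℕ) (r γ : ℝ) (hr0 : 0 ≤ r) (hr1 : r < 1) (hγ : 0 ≤ γ) :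
    Hfun m r γ ≤ ⨆ γ ∈ Set.Ici (0 : ℝ), Hfun m r γ := by
  have hb : BddAbove (Set.range fun γ : ℝ => ⨆ _ : γ ∈ Set.Ici (0 : ℝ), Hfun m r γ) := by
    refine ⟨2 * (2 * (m + 2) * (π / 2) * π), ?_⟩
    rintro _ ⟨γ', rfl⟩
    exact Real.iSup_le (fun h => Hfun_le m r γ' hr0 hr1 h) (by positivity)
  have h1 := le_ciSup hb γ
  have h2 : (⨆ _ : γ ∈ Set.Ici (0 : ℝ), Hfun m r γ) = Hfun m r γ := ciSup_pos (Set.mem_Ici.mpr hγ)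
  exact h2 ▸ h1

lemma abs_inner_le {m : ℕ} (hm : 1 ≤ m) (r : ℝ) (hr0 : 0 ≤ r) (hr1 : r < 1) (e : Eu (m+2))
    (he : ‖e‖ = 1) (g : Metric.sphere (0 : Eu (m+2)) 1 → ℝ) (hg : Measurable g)
    (hg1 : ∀ᵐ y ∂((volume : Measure (Eu (m+2))).toSphere), |g y| ≤ 1) (l : Eu (m+2))
    (hl : 0 < ⟪e, l⟫) :
    |⟪gradient (poissonBall g) (r • e), l⟫| ≤ Kcoef (m + 2) r * ‖l‖ := by
  have hx : ‖r • e‖ = r := by rw [norm_smul, he, mul_one, Real.norm_of_nonneg hr0]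
  obtain ⟨v, B, hv, hev, hB, hdec⟩ := exists_decomp e l he
  set A := ⟪e, l⟫ with hA
  have hω := sphereArea_pos (m + 2) (by omega)
  have hnl : ‖l‖ = A * √(1 + (B / A) ^ 2) := by
    rw [hdec, norm_sq_decomp e v he hv hev]
    rw [show A ^ 2 + B ^ 2 = A ^ 2 * (1 + (B / A) ^ 2) by field_simp, Real.sqrt_mul (by positivity),
      Real.sqrt_sq hl.le]
  have hint : Integrable (fun y : Metric.sphere (0 : Eu (m+2)) 1 =>
      |⟪gradK (r • e) (y : Eu (m+2)), l⟫|) ((volume : Measure (Eu (m+2))).toSphere) := by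
    have hmg := measurable_gradK (r • e)
    have hms : Measurable fun y : Metric.sphere (0 : Eu (m+2)) 1 =>
        ‖⟪gradK (r • e) (y : Eu (m+2)), l⟫‖ := by fun_prop
    simp only [← Real.norm_eq_abs]
    refine Integrable.of_bound hms.aestronglyMeasurable
      ((2 / (1 - r) ^ (m + 2) + ((m : ℝ) + 2) / (1 - r) ^ (m + 4) * 2) * ‖l‖)
      (Eventually.of_forall fun y => ?_)
    rw [norm_norm, Real.norm_eq_abs]
    refine (abs_real_inner_le_norm _ _).trans ?_
    gcongr
    exact gradK_bound (1 - r) (by linarith) _ _ (by rw [hx]; linarith) (by simp)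
  rw [inner_gradient_poisson g hg hg1 (r • e) (by rw [hx]; exact hr1) l, abs_mul,
    abs_of_pos (by positivity)]
  calc (1 / sphereArea (m + 2)) * |∫ y : Metric.sphere (0 : Eu (m+2)) 1,
          g y * ⟪gradK (r • e) (y : Eu (m+2)), l⟫ ∂((volume : Measure (Eu (m+2))).toSphere)|
      ≤ (1 / sphereArea (m + 2)) * ∫ y : Metric.sphere (0 : Eu (m+2)) 1,
          |⟪gradK (r • e) (y : Eu (m+2)), l⟫| ∂((volume : Measure (Eu (m+2))).toSphere) := by
        gcongr
        rw [← Real.norm_eq_abs]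
        refine norm_integral_le_of_norm_le hint ?_
        filter_upwards [hg1] with y hy
        rw [Real.norm_eq_abs, abs_mul]
        exact mul_le_of_le_one_left (abs_nonneg _) hy
    _ = (1 / sphereArea (m + 2)) * ∫ y : Metric.sphere (0 : Eu (m+2)) 1,
          |kern m r A B ⟪e, (y : Eu (m+2))⟫ ⟪v, (y : Eu (m+2))⟫|
            ∂((volume : Measure (Eu (m+2))).toSphere) := by
        congr 2
        funext y
        rw [hdec, inner_gradK r A B e v y he hev (by simp)]
    _ = Ccst m r * (A * Idbl m r (B / A)) := integral_kern hm r A B hr0 hr1 hl hB e v he hv hev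
    _ = Ccst m r * Hfun m r (B / A) * ‖l‖ := by
        have : 0 < √(1 + (B / A) ^ 2) := Real.sqrt_pos.mpr (by positivity)
        rw [hnl, Hfun]
        field_simp
    _ ≤ Kcoef (m + 2) r * ‖l‖ := by
        rw [Kcoef_eq]
        have := Ccst_nonneg m r hr0 hr1
        gcongr
        exact Hfun_le_sup m r (B / A) hr0 hr1 (by positivity)

lemma norm_gradient_le {m : ℕ} (hm : 1 ≤ m) (r : ℝ) (hr0 : 0 ≤ r) (hr1 : r < 1) (e : Eu (m+2))
    (he : ‖e‖ = 1) (g : Metric.sphere (0 : Eu (m+2)) 1 → ℝ) (hg : Measurable g)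
    (hg1 : ∀ᵐ y ∂((volume : Measure (Eu (m+2))).toSphere), |g y| ≤ 1) :
    ‖gradient (poissonBall g) (r • e)‖ ≤ Kcoef (m + 2) r := by
  have hall : ∀ l, ⟪e, l⟫ ≠ 0 →
      |⟪gradient (poissonBall g) (r • e), l⟫| ≤ Kcoef (m + 2) r * ‖l‖ := by
    intro l hl
    rcases lt_or_gt_of_ne hl with h | h
    · have := abs_inner_le hm r hr0 hr1 e he g hg hg1 (-l) (by rw [inner_neg_right]; linarith)
      rwa [inner_neg_right, abs_neg, norm_neg] at this
    · exact abs_inner_le hm r hr0 hr1 e he g hg hg1 l h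
  set w := gradient (poissonBall g) (r • e) with hw
  have hww : |⟪w, w⟫| ≤ Kcoef (m + 2) r * ‖w‖ := by
    by_cases h0 : ⟪e, w⟫ = 0
    · have hlim : Tendsto (fun t : ℝ => Kcoef (m + 2) r * ‖w + t • e‖ - |⟪w, w + t • e⟫|)
          (nhdsWithin 0 {0}ᶜ) (nhds (Kcoef (m + 2) r * ‖w‖ - |⟪w, w⟫|)) := by
        have hc : Continuous (fun t : ℝ =>
            Kcoef (m + 2) r * ‖w + t • e‖ - |⟪w, w + t • e⟫|) := by fun_prop
        have := (hc.tendsto 0).mono_left (nhdsWithin_le_nhds (s := {0}ᶜ))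
        simpa using this
      have := ge_of_tendsto hlim (b := 0) (by
        filter_upwards [self_mem_nhdsWithin] with t ht
        have := hall (w + t • e) (by
          rw [inner_add_right, h0, inner_smul_right, real_inner_self_eq_norm_sq, he]
          simpa using ht)
        linarith)
      linarith
    · exact hall w h0
  rw [real_inner_self_eq_norm_sq, abs_of_nonneg (by positivity)] at hww
  rcases (norm_nonneg w).eq_or_lt with h | h
  · rw [← h, Kcoef_eq]
    exact mul_nonneg (Ccst_nonneg m r hr0 hr1)
      (Real.iSup_nonneg fun γ => Real.iSup_nonneg fun _ => Hfun_nonneg m r γ)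
  · nlinarith

lemma Kcoef_le {m : ℕ} (hm : 1 ≤ m) (r : ℝ) (hr0 : 0 ≤ r) (hr1 : r < 1) (e : Eu (m+2))
    (he : ‖e‖ = 1) (c : ℝ) (hc : ∀ g : Metric.sphere (0 : Eu (m+2)) 1 → ℝ, Measurable g →
          (∀ᵐ y ∂((volume : Measure (Eu (m+2))).toSphere), |g y| ≤ 1) →
          ‖gradient (poissonBall g) (r • e)‖ ≤ c) :
    Kcoef (m + 2) r ≤ c := by
  have hx : ‖r • e‖ = r := by rw [norm_smul, he, mul_one, Real.norm_of_nonneg hr0]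
  have hc0 : 0 ≤ c := (norm_nonneg _).trans (hc (fun _ => 0) measurable_const (by simp))
  have hC : 0 < Ccst m r := by
    have : 0 < 1 - r := by linarith
    have : (0:ℝ) < m := by exact_mod_cast hm
    unfold Ccst
    positivity
  obtain ⟨v, hv, hev⟩ := exists_unit_perp e he
  have key : ∀ γ : ℝ, 0 ≤ γ → Hfun m r γ ≤ c / Ccst m r := by
    intro γ hγ
    have hkm : Measurable fun y : Metric.sphere (0 : Eu (m+2)) 1 =>
        kern m r 1 γ ⟪e, (y : Eu (m+2))⟫ ⟪v, (y : Eu (m+2))⟫ := by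
      unfold kern
      fun_prop
    obtain ⟨g, hg, hgdef⟩ : ∃ g : Metric.sphere (0 : Eu (m+2)) 1 → ℝ, Measurable g ∧
        ∀ y, g y = if 0 ≤ kern m r 1 γ ⟪e, (y : Eu (m+2))⟫ ⟪v, (y : Eu (m+2))⟫ then 1 else -1 :=
      ⟨_, Measurable.ite (measurableSet_Ici.preimage hkm) measurable_const measurable_const,
        fun y => rfl⟩
    have hg1 : ∀ᵐ y ∂((volume : Measure (Eu (m+2))).toSphere), |g y| ≤ 1 := by
      refine Eventually.of_forall fun y => ?_
      rw [hgdef]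
      split_ifs <;> simp
    have h1 := inner_gradient_poisson g hg hg1 (r • e) (by rw [hx]; exact hr1)
      ((1:ℝ) • e + γ • v)
    have h2 : ∀ y : Metric.sphere (0 : Eu (m+2)) 1,
        g y * ⟪gradK (r • e) (y : Eu (m+2)), (1:ℝ) • e + γ • v⟫ =
          |kern m r 1 γ ⟪e, (y : Eu (m+2))⟫ ⟪v, (y : Eu (m+2))⟫| := by
      intro y
      rw [inner_gradK r 1 γ e v y he hev (by simp)]
      rw [hgdef]
      split_ifs with h
      · rw [one_mul, abs_of_nonneg h]
      · rw [abs_of_neg (not_le.mp h), neg_one_mul]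
    simp_rw [h2] at h1
    rw [integral_kern hm r 1 γ hr0 hr1 one_pos hγ e v he hv hev, one_mul, div_one] at h1
    have h3 := real_inner_le_norm (gradient (poissonBall g) (r • e)) ((1:ℝ) • e + γ • v)
    have h4 := hc g hg hg1
    rw [h1, norm_sq_decomp e v he hv hev, one_pow] at h3
    have hs : 0 < √(1 + γ ^ 2) := Real.sqrt_pos.mpr (by positivity)
    have h5 : Ccst m r * Idbl m r γ ≤ c * √(1 + γ ^ 2) :=
      h3.trans (mul_le_mul_of_nonneg_right h4 hs.le)
    rw [le_div_iff₀ hC, Hfun, one_div, mul_assoc, inv_mul_le_iff₀ hs]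
    linarith
  rw [Kcoef_eq, ← le_div_iff₀' hC]
  have hq : 0 ≤ c / Ccst m r := by positivity
  exact Real.iSup_le (fun γ => Real.iSup_le (fun h => key γ h) hq) hq

/-- For `n ≥ 3` and `x` in the open unit ball `𝔹 ⊂ ℝⁿ`, the smallest
constant `c` such that `|∇u(x)| ≤ c ‖g‖_{L^∞(S^{n-1})}` for every Poisson integral `u`
of `g ∈ L^∞(S^{n-1})` (equivalently, such that `|∇u(x)| ≤ c` whenever `‖g‖_∞ ≤ 1`)
equals `𝒦_n(x)` as given by the double-integral formula. -/
theorem sharp_gradient_coefficient_ball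
    (n : ℕ) (hn : 3 ≤ n) (x : Eu n) (hx : x ∈ Metric.ball (0 : Eu n) 1) :
    IsLeast {c : ℝ |
        ∀ g : Metric.sphere (0 : Eu n) 1 → ℝ, Measurable g →
          (∀ᵐ y ∂((volume : Measure (Eu n)).toSphere), |g y| ≤ 1) →
          ‖gradient (poissonBall g) x‖ ≤ c}
      (Kcoef n ‖x‖) := by
  obtain ⟨m, rfl⟩ : ∃ m, n = m + 2 := ⟨n - 2, by omega⟩
  have hm : 1 ≤ m := by omega
  have hr1 : ‖x‖ < 1 := by simpa using hx
  have hr0 : 0 ≤ ‖x‖ := norm_nonneg x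
  obtain ⟨e, he, hxe⟩ : ∃ e : Eu (m+2), ‖e‖ = 1 ∧ x = ‖x‖ • e := by
    by_cases h : x = 0
    · exact ⟨EuclideanSpace.single 0 1, by simp, by simp [h]⟩
    · exact ⟨‖x‖⁻¹ • x, norm_smul_inv_norm h, by
        rw [smul_smul, mul_inv_cancel₀ (norm_ne_zero_iff.mpr h), one_smul]⟩
  generalize ‖x‖ = r at *
  subst hxe
  constructor
  · intro g hg hg1
    exact norm_gradient_le hm r hr0 hr1 e he g hg hg1
  · intro c hc
    exact Kcoef_le hm r hr0 hr1 e he c hc
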